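/- arXiv:1906.05568 — 3 statements merged into one kernel-verified Lean document; each statement's English description precedes it below -/
import Mathlib

section
/- There exists an absolute constant C ≥ 1 such that the following holds. Let f : {0,1}^n → {0,1} be a monotone Boolean function, let 0 < p < q ≤ 1/2, and let M > 0. Suppose f is M-global in the interval [p,q] (i.e. for every x ∈ [p,q] and every J ⊆ [n] with |J| ≤ M one has μ_x(f_{J→1}) ≤ μ_x(f)^{0.01}), that μ_q(f) ≤ 1/2, and that μ_p(f) ≥ e^{−M/C}. Then μ_q(f) ≥ μ_p(f)^{(p/q)^{1/C}}; in particular, q ≤ M^C·p. -/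
open Finset

namespace GlobalHC

variable {n : ℕ}

/-- Expectation with respect to the `p`-biased measure on `{0,1}^n`. -/
noncomputable def Ep (p : ℝ) (f : (Fin n → Bool) → ℝ) : ℝ :=
  ∑ x : Fin n → Bool, (∏ i, if x i then p else 1 - p) * f x

/-- The `r`-norm with respect to the `p`-biased measure. -/
noncomputable def pnorm (p r : ℝ) (f : (Fin n → Bool) → ℝ) : ℝ :=
  (Ep p fun x => |f x| ^ r) ^ (1 / r)

/-- The `p`-biased character `χ_S`. -/
noncomputable def chi (p : ℝ) (S : Finset (Fin n)) (x : Fin n → Bool) : ℝ :=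
  ∏ i ∈ S, ((if x i then (1 : ℝ) else 0) - p) / Real.sqrt (p * (1 - p))

/-- The `p`-biased Fourier coefficient `f̂(S)`. -/
noncomputable def coeff (p : ℝ) (f : (Fin n → Bool) → ℝ) (S : Finset (Fin n)) : ℝ :=
  Ep p fun x => f x * chi p S x

/-- The derivative `D_S f = Σ_{T ⊇ S} f̂(T) χ_{T∖S}`. -/
noncomputable def derivS (p : ℝ) (S : Finset (Fin n)) (f : (Fin n → Bool) → ℝ) :
    (Fin n → Bool) → ℝ :=
  fun x => ∑ T ∈ Finset.univ.filter (fun T => S ⊆ T), coeff p f T * chi p (T \ S) x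

/-- The generalised influence `I_S(f) = σ^{-2|S|} Σ_{T ⊇ S} f̂(T)²`. -/
noncomputable def genInf (p : ℝ) (S : Finset (Fin n)) (f : (Fin n → Bool) → ℝ) : ℝ :=
  (∑ T ∈ Finset.univ.filter (fun T => S ⊆ T), coeff p f T ^ 2) / (p * (1 - p)) ^ S.card

/-- The noise operator `T_ρ f = Σ_S ρ^{|S|} f̂(S) χ_S`. -/
noncomputable def noise (p ρ : ℝ) (f : (Fin n → Bool) → ℝ) : (Fin n → Bool) → ℝ :=
  fun x => ∑ S : Finset (Fin n), ρ ^ S.card * coeff p f S * chi p S x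

/-- The degree-`r` truncation `f^{≤ r}`. -/
noncomputable def trunc (p : ℝ) (r : ℕ) (f : (Fin n → Bool) → ℝ) : (Fin n → Bool) → ℝ :=
  fun x => ∑ S ∈ Finset.univ.filter (fun S : Finset (Fin n) => S.card ≤ r),
    coeff p f S * chi p S x

/-- The restriction `f_{J→1}` setting all coordinates in `J` to `1`. -/
def restrict1 (J : Finset (Fin n)) (f : (Fin n → Bool) → ℝ) : (Fin n → Bool) → ℝ :=
  fun x => f (fun i => if i ∈ J then true else x i)

/-- `f` is `(r,δ)`-global (for the `p`-biased measure). -/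
def IsGlobal (p r δ : ℝ) (f : (Fin n → Bool) → ℝ) : Prop :=
  ∀ J : Finset (Fin n), (J.card : ℝ) ≤ r → Ep p (restrict1 J f) ≤ Ep p f + δ

/-- The total influence `I[f] = Σ_i Pr_{μ_p}[f(x ⊕ e_i) ≠ f(x)]`. -/
noncomputable def totalInf (p : ℝ) (f : (Fin n → Bool) → ℝ) : ℝ :=
  ∑ i : Fin n, Ep p fun x => if f (Function.update x i (!x i)) = f x then 0 else 1

/-- Noise stability `Stab_ρ(f) = Σ_S ρ^{|S|} f̂(S)²` (w.r.t. `μ_p`). -/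
noncomputable def stab (p ρ : ℝ) (f : (Fin n → Bool) → ℝ) : ℝ :=
  ∑ S : Finset (Fin n), ρ ^ S.card * coeff p f S ^ 2

/-- `f` is monotone. -/
def Mono (f : (Fin n → Bool) → ℝ) : Prop :=
  ∀ x y : Fin n → Bool, (∀ i, x i ≤ y i) → f x ≤ f y



/-! ### Splitting off the first coordinate -/

theorem sum_cons (g : (Fin (n+1) → Bool) → ℝ) :
    ∑ x, g x = ∑ x : Fin n → Bool, g (Fin.cons true x) +
      ∑ x : Fin n → Bool, g (Fin.cons false x) := by
  rw [← (Fin.consEquiv (fun _ : Fin (n+1) => Bool)).sum_comp, Fintype.sum_prod_type,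
    Fintype.sum_bool]
  rfl

theorem Ep_cons (p : ℝ) (f : (Fin (n+1) → Bool) → ℝ) :
    Ep p f = p * Ep p (fun x => f (Fin.cons true x)) +
      (1 - p) * Ep p (fun x => f (Fin.cons false x)) := by
  unfold Ep
  rw [sum_cons, Finset.mul_sum, Finset.mul_sum]
  congr 1 <;> refine Finset.sum_congr rfl fun x _ => ?_ <;>
    rw [Fin.prod_univ_succ] <;> simp <;> ring

theorem Ep_zero (p : ℝ) (f : (Fin 0 → Bool) → ℝ) : Ep p f = f default := by
  simp only [Ep, Fintype.sum_unique, Finset.univ_eq_empty, Finset.prod_empty, one_mul]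
  exact congrArg f (Subsingleton.elim _ _)

theorem Ep_add (p : ℝ) (f g : (Fin n → Bool) → ℝ) :
    Ep p (fun x => f x + g x) = Ep p f + Ep p g := by
  simp [Ep, mul_add, Finset.sum_add_distrib]

theorem Ep_mul (p k : ℝ) (f : (Fin n → Bool) → ℝ) :
    Ep p (fun x => k * f x) = k * Ep p f := by
  simp only [Ep, Finset.mul_sum]
  exact Finset.sum_congr rfl fun x _ => by ring

theorem weight_nonneg {p : ℝ} (h0 : 0 ≤ p) (h1 : p ≤ 1) (x : Fin n → Bool) :
    0 ≤ ∏ i, (if x i then p else 1 - p) :=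
  Finset.prod_nonneg fun i _ => by split <;> linarith

theorem Ep_le {p : ℝ} (h0 : 0 ≤ p) (h1 : p ≤ 1) {f g : (Fin n → Bool) → ℝ}
    (h : ∀ x, f x ≤ g x) : Ep p f ≤ Ep p g :=
  Finset.sum_le_sum fun x _ => mul_le_mul_of_nonneg_left (h x) (weight_nonneg h0 h1 x)

theorem Ep_nonneg {p : ℝ} (h0 : 0 ≤ p) (h1 : p ≤ 1) {f : (Fin n → Bool) → ℝ}
    (h : ∀ x, 0 ≤ f x) : 0 ≤ Ep p f :=
  Finset.sum_nonneg fun x _ => mul_nonneg (weight_nonneg h0 h1 x) (h x)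

theorem Ep_cs {p : ℝ} (h0 : 0 ≤ p) (h1 : p ≤ 1) (f g : (Fin n → Bool) → ℝ) :
    (Ep p fun x => f x * g x) ^ 2 ≤ (Ep p fun x => f x ^ 2) * (Ep p fun x => g x ^ 2) := by
  have h := Finset.sum_mul_sq_le_sq_mul_sq Finset.univ
    (fun x : Fin n → Bool => √(∏ i, (if x i then p else 1 - p)) * f x)
    (fun x : Fin n → Bool => √(∏ i, (if x i then p else 1 - p)) * g x)
  have e : ∀ x : Fin n → Bool, √(∏ i, (if x i then p else 1 - p)) ^ 2 =
      ∏ i, (if x i then p else 1 - p) := fun x => Real.sq_sqrt (weight_nonneg h0 h1 x)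
  simp only [mul_pow, e] at h
  unfold Ep
  refine le_trans (le_of_eq ?_) h
  congr 1
  refine Finset.sum_congr rfl fun x _ => ?_
  have hx := e x
  generalize (∏ i, (if x i then p else 1 - p)) = w at *
  linear_combination (-(f x * g x)) * hx

/-! ### Multilinear expansions -/

/-- Multilinear polynomial with coefficients `c` evaluated at `φ (x i)`. -/
noncomputable def ML (φ : Bool → ℝ) (c : (Fin n → Bool) → ℝ) (x : Fin n → Bool) : ℝ :=
  ∑ S : Fin n → Bool, (∏ i, if S i then φ (x i) else 1) * c S

/-- Upper weight `∑_{T ⊇ S} c(T)²`. -/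
noncomputable def UW (c : (Fin n → Bool) → ℝ) (S : Fin n → Bool) : ℝ :=
  ∑ T : Fin n → Bool, (∏ i, if S i then (if T i then (1:ℝ) else 0) else 1) * c T ^ 2

/-- Size of the set with indicator `S`. -/
def sz (S : Fin n → Bool) : ℕ := ∑ i, if S i then 1 else 0

theorem sz_cons (b : Bool) (S : Fin n → Bool) :
    sz (Fin.cons b S : Fin (n+1) → Bool) = (if b then 1 else 0) + sz S := by
  unfold sz
  rw [Fin.sum_univ_succ]
  simp only [Fin.cons_zero, Fin.cons_succ]

theorem ML_cons (φ : Bool → ℝ) (c : (Fin (n+1) → Bool) → ℝ) (b : Bool) (x : Fin n → Bool) :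
    ML φ c (Fin.cons b x) = ML φ (fun S => c (Fin.cons false S)) x +
      φ b * ML φ (fun S => c (Fin.cons true S)) x := by
  unfold ML
  rw [sum_cons, Finset.mul_sum, add_comm]
  congr 1 <;> refine Finset.sum_congr rfl fun x _ => ?_ <;>
    rw [Fin.prod_univ_succ] <;> simp <;> ring

theorem UW_cons_true (c : (Fin (n+1) → Bool) → ℝ) (S : Fin n → Bool) :
    UW c (Fin.cons true S) = UW (fun S => c (Fin.cons true S)) S := by
  unfold UW
  rw [sum_cons]
  simp [Fin.prod_univ_succ]

theorem UW_cons_false (c : (Fin (n+1) → Bool) → ℝ) (S : Fin n → Bool) :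
    UW c (Fin.cons false S) = UW (fun S => c (Fin.cons false S)) S +
      UW (fun S => c (Fin.cons true S)) S := by
  unfold UW
  rw [sum_cons]
  simp [Fin.prod_univ_succ, add_comm]

theorem ML_lin (φ : Bool → ℝ) (c d : (Fin n → Bool) → ℝ) (u v : ℝ) (x : Fin n → Bool) :
    ML φ (fun S => u * c S + v * d S) x = u * ML φ c x + v * ML φ d x := by
  simp only [ML, Finset.mul_sum, ← Finset.sum_add_distrib]
  exact Finset.sum_congr rfl fun x _ => by ring

theorem UW_mul (c : (Fin n → Bool) → ℝ) (u : ℝ) (S : Fin n → Bool) :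
    UW (fun S => u * c S) S = u ^ 2 * UW c S := by
  simp only [UW, Finset.mul_sum]
  exact Finset.sum_congr rfl fun x _ => by ring

theorem UW_mono {c d : (Fin n → Bool) → ℝ} (h : ∀ S, c S ^ 2 ≤ d S ^ 2) (S : Fin n → Bool) :
    UW c S ≤ UW d S :=
  Finset.sum_le_sum fun T _ => mul_le_mul_of_nonneg_left (h T)
    (Finset.prod_nonneg fun i _ => by split_ifs <;> norm_num)

theorem UW_nonneg (c : (Fin n → Bool) → ℝ) (S : Fin n → Bool) : 0 ≤ UW c S :=
  Finset.sum_nonneg fun T _ => mul_nonneg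
    (Finset.prod_nonneg fun i _ => by split_ifs <;> norm_num) (sq_nonneg _)

/-- `∑_S W_S = ∑_T 2^{|T|} c(T)²`. -/
theorem sum_UW (c : (Fin n → Bool) → ℝ) :
    ∑ S, UW c S = ∑ T, 2 ^ sz T * c T ^ 2 := by
  induction n with
  | zero => simp [UW, sz]
  | succ n ih =>
    rw [sum_cons, sum_cons]
    simp only [UW_cons_true, UW_cons_false, Finset.sum_add_distrib, ih, sz_cons]
    simp only [if_true, pow_add, pow_one, mul_assoc, ← Finset.mul_sum]
    simp
    ring

/-! ### Hypercontractivity -/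

theorem onestep (p κ φ1 φ0 a b c d : ℝ) (h0 : 0 ≤ p) (h1 : p ≤ 1)
    (e1 : p * φ1 + (1 - p) * φ0 = 0) (e2 : p * φ1 ^ 2 + (1 - p) * φ0 ^ 2 = 1 / 4)
    (k1 : φ1 ^ 2 ≤ κ) (k0 : φ0 ^ 2 ≤ κ) :
    p * ((a + φ1 * b) ^ 2 * (c + φ1 * d) ^ 2) + (1 - p) * ((a + φ0 * b) ^ 2 * (c + φ0 * d) ^ 2)
      ≤ a ^ 2 * c ^ 2 + a ^ 2 * d ^ 2 + b ^ 2 * c ^ 2 + b ^ 2 * d ^ 2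
        + κ * (b ^ 2 * d ^ 2) := by
  have key : ∀ φ : ℝ, φ ^ 2 ≤ κ → (a + φ * b) ^ 2 * (c + φ * d) ^ 2 ≤
      a ^ 2 * c ^ 2 + φ * (2 * (a * b * c ^ 2 + a ^ 2 * c * d)) +
      φ ^ 2 * (4 * (a ^ 2 * d ^ 2 + b ^ 2 * c ^ 2) + 3 * κ * (b ^ 2 * d ^ 2)) := by
    intro φ hφ
    have h2 : φ ^ 2 * (φ ^ 2 * (b ^ 2 * d ^ 2)) ≤ φ ^ 2 * (κ * (b ^ 2 * d ^ 2)) := by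
      gcongr
    nlinarith [mul_nonneg (sq_nonneg φ) (sq_nonneg (a * d - b * c)),
      mul_nonneg (sq_nonneg φ) (sq_nonneg (a * d - φ * b * d)),
      mul_nonneg (sq_nonneg φ) (sq_nonneg (b * c - φ * b * d))]
  have m1 := mul_le_mul_of_nonneg_left (key φ1 k1) h0
  have m0 := mul_le_mul_of_nonneg_left (key φ0 k0) (sub_nonneg.2 h1)
  have hk : 0 ≤ κ * (b ^ 2 * d ^ 2) :=
    mul_nonneg ((sq_nonneg _).trans k1) (by positivity)
  have hb : 0 ≤ b ^ 2 * d ^ 2 := by positivity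
  generalize (a + φ1 * b) ^ 2 * (c + φ1 * d) ^ 2 = X at *
  generalize (a + φ0 * b) ^ 2 * (c + φ0 * d) ^ 2 = Y at *
  generalize hA : 2 * (a * b * c ^ 2 + a ^ 2 * c * d) = A at *
  have e : p * (a ^ 2 * c ^ 2 + φ1 * A +
      φ1 ^ 2 * (4 * (a ^ 2 * d ^ 2 + b ^ 2 * c ^ 2) + 3 * κ * (b ^ 2 * d ^ 2))) +
      (1 - p) * (a ^ 2 * c ^ 2 + φ0 * A +
      φ0 ^ 2 * (4 * (a ^ 2 * d ^ 2 + b ^ 2 * c ^ 2) + 3 * κ * (b ^ 2 * d ^ 2))) =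
      a ^ 2 * c ^ 2 + 1 / 4 * (4 * (a ^ 2 * d ^ 2 + b ^ 2 * c ^ 2) + 3 * κ * (b ^ 2 * d ^ 2)) := by
    linear_combination A * e1 +
      (4 * (a ^ 2 * d ^ 2 + b ^ 2 * c ^ 2) + 3 * κ * (b ^ 2 * d ^ 2)) * e2
  linarith

theorem hyper (p κ : ℝ) (φ : Bool → ℝ) (h0 : 0 ≤ p) (h1 : p ≤ 1)
    (e1 : p * φ true + (1 - p) * φ false = 0)
    (e2 : p * φ true ^ 2 + (1 - p) * φ false ^ 2 = 1 / 4)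
    (k1 : φ true ^ 2 ≤ κ) (k0 : φ false ^ 2 ≤ κ) (c d : (Fin n → Bool) → ℝ) :
    Ep p (fun x => ML φ c x ^ 2 * ML φ d x ^ 2) ≤ ∑ S, κ ^ sz S * (UW c S * UW d S) := by
  induction n with
  | zero => simp [Ep_zero, ML, UW, sz]
  | succ n ih =>
    have hκ : 0 ≤ κ := (sq_nonneg _).trans k1
    rw [Ep_cons, sum_cons]
    simp only [ML_cons, UW_cons_true, UW_cons_false, sz_cons]
    generalize hc0 : (fun S => c (Fin.cons false S)) = c0
    generalize hc1 : (fun S => c (Fin.cons true S)) = c1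
    generalize hd0 : (fun S => d (Fin.cons false S)) = d0
    generalize hd1 : (fun S => d (Fin.cons true S)) = d1
    rw [← Ep_mul, ← Ep_mul, ← Ep_add]
    refine (Ep_le h0 h1 fun x => onestep p κ _ _ _ _ _ _ h0 h1 e1 e2 k1 k0).trans ?_
    rw [Ep_add, Ep_add, Ep_add, Ep_add, Ep_mul]
    have i1 := ih c0 d0
    have i2 := ih c0 d1
    have i3 := ih c1 d0
    have i4 := ih c1 d1
    have i5 := mul_le_mul_of_nonneg_left i4 hκ
    refine (add_le_add (add_le_add (add_le_add (add_le_add i1 i2) i3) i4) i5).trans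
      (le_of_eq ?_)
    simp only [Finset.mul_sum, ← Finset.sum_add_distrib]
    refine Finset.sum_congr rfl fun S _ => ?_
    simp [pow_add]
    ring

/-! ### Basic Fourier facts -/

theorem parseval (p : ℝ) (φ : Bool → ℝ)
    (e1 : p * φ true + (1 - p) * φ false = 0)
    (e2 : p * φ true ^ 2 + (1 - p) * φ false ^ 2 = 1) (c d : (Fin n → Bool) → ℝ) :
    Ep p (fun x => ML φ c x * ML φ d x) = ∑ S, c S * d S := by
  induction n with
  | zero => simp [Ep_zero, ML]
  | succ n ih =>
    rw [Ep_cons, sum_cons]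
    simp only [ML_cons]
    generalize hc0 : (fun S => c (Fin.cons false S)) = c0
    generalize hc1 : (fun S => c (Fin.cons true S)) = c1
    generalize hd0 : (fun S => d (Fin.cons false S)) = d0
    generalize hd1 : (fun S => d (Fin.cons true S)) = d1
    have j1 := ih c0 d0
    have j2 := ih c1 d1
    rw [← Ep_mul, ← Ep_mul, ← Ep_add]
    have : ∀ x, p * ((ML φ c0 x + φ true * ML φ c1 x) * (ML φ d0 x + φ true * ML φ d1 x)) +
        (1 - p) * ((ML φ c0 x + φ false * ML φ c1 x) * (ML φ d0 x + φ false * ML φ d1 x)) =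
        ML φ c0 x * ML φ d0 x + ML φ c1 x * ML φ d1 x := by
      intro x
      linear_combination (ML φ c0 x * ML φ d1 x + ML φ c1 x * ML φ d0 x) * e1 +
        (ML φ c1 x * ML φ d1 x) * e2
    simp only [this]
    rw [Ep_add, j1, j2, ← hc0, ← hc1, ← hd0, ← hd1, add_comm]

/-- The normalised character of one coordinate. -/
noncomputable def ch (p s : ℝ) (b : Bool) : ℝ := ((if b then 1 else 0) - p) / s

/-- Fourier coefficients, recursively. -/
noncomputable def fc (p s : ℝ) : (n : ℕ) → ((Fin n → Bool) → ℝ) → (Fin n → Bool) → ℝ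
  | 0, f => f
  | n+1, f => fun S =>
      if S 0 then s * (fc p s n (fun x => f (Fin.cons true x)) (Fin.tail S) -
        fc p s n (fun x => f (Fin.cons false x)) (Fin.tail S))
      else p * fc p s n (fun x => f (Fin.cons true x)) (Fin.tail S) +
        (1 - p) * fc p s n (fun x => f (Fin.cons false x)) (Fin.tail S)

theorem fc_cons_true (p s : ℝ) (f : (Fin (n+1) → Bool) → ℝ) (S : Fin n → Bool) :
    fc p s (n+1) f (Fin.cons true S) = s * (fc p s n (fun x => f (Fin.cons true x)) S -
        fc p s n (fun x => f (Fin.cons false x)) S) := by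
  simp [fc]

theorem fc_cons_false (p s : ℝ) (f : (Fin (n+1) → Bool) → ℝ) (S : Fin n → Bool) :
    fc p s (n+1) f (Fin.cons false S) = p * fc p s n (fun x => f (Fin.cons true x)) S +
        (1 - p) * fc p s n (fun x => f (Fin.cons false x)) S := by
  simp [fc]

theorem fc_lin (p s : ℝ) (f g : (Fin n → Bool) → ℝ) (u v : ℝ) (S : Fin n → Bool) :
    fc p s n (fun x => u * f x + v * g x) S = u * fc p s n f S + v * fc p s n g S := by
  induction n with
  | zero => simp [fc]
  | succ n ih =>
    simp only [fc]
    split_ifs <;> rw [ih, ih] <;> ring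

theorem ML_fc (p s : ℝ) (hs : s ≠ 0) (f : (Fin n → Bool) → ℝ)
    (x : Fin n → Bool) : ML (ch p s) (fc p s n f) x = f x := by
  induction n with
  | zero => simp [ML, fc]; congr 1; exact Subsingleton.elim _ _
  | succ n ih =>
    obtain ⟨b, y, rfl⟩ : ∃ b y, x = Fin.cons b y := ⟨x 0, Fin.tail x, (Fin.cons_self_tail x).symm⟩
    rw [ML_cons]
    simp only [fc_cons_true, fc_cons_false]
    rw [ML_lin]
    have : (fun S => s * (fc p s n (fun x => f (Fin.cons true x)) S -
        fc p s n (fun x => f (Fin.cons false x)) S)) = (fun S =>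
        s * fc p s n (fun x => f (Fin.cons true x)) S +
        (-s) * fc p s n (fun x => f (Fin.cons false x)) S) := by
      funext S; ring
    rw [this, ML_lin, ih, ih]
    cases b <;> simp [ch] <;> field_simp <;> ring

theorem fc_zero (p s : ℝ) (f : (Fin n → Bool) → ℝ) :
    fc p s n f (fun _ => false) = Ep p f := by
  induction n with
  | zero =>
    rw [Ep_zero]
    exact congrArg f (Subsingleton.elim _ _)
  | succ n ih =>
    have : (fun _ : Fin (n+1) => false) = Fin.cons false (fun _ : Fin n => false) := by
      funext i; refine Fin.cases ?_ (fun j => ?_) i <;> simp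
    rw [this, fc_cons_false, ih, ih, Ep_cons]

theorem cons_le {b b' : Bool} {x y : Fin n → Bool} (hb : b ≤ b') (h : ∀ i, x i ≤ y i) :
    ∀ i, (Fin.cons b x : Fin (n+1) → Bool) i ≤ (Fin.cons b' y : Fin (n+1) → Bool) i := by
  intro i; refine Fin.cases ?_ (fun j => ?_) i <;> simp [hb, h]

theorem Mono.cons {f : (Fin (n+1) → Bool) → ℝ} (h : Mono f) (b : Bool) :
    Mono (fun x => f (Fin.cons b x)) := fun _ _ hxy => h _ _ (cons_le le_rfl hxy)

/-- Pointwise variance decomposition of the coefficients. -/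
theorem fc_sq (p s : ℝ) (hs : s ^ 2 = p * (1 - p)) (f : (Fin (n+1) → Bool) → ℝ)
    (S : Fin n → Bool) :
    fc p s (n+1) f (Fin.cons false S) ^ 2 + fc p s (n+1) f (Fin.cons true S) ^ 2 =
      p * fc p s n (fun x => f (Fin.cons true x)) S ^ 2 +
      (1 - p) * fc p s n (fun x => f (Fin.cons false x)) S ^ 2 := by
  rw [fc_cons_true, fc_cons_false, mul_pow, hs]; ring

/-- Generalised influences of monotone functions are controlled by restrictions. -/
theorem UW_le (p s : ℝ) (hs : s ^ 2 = p * (1 - p)) (h0 : 0 ≤ p) (h1 : p ≤ 1)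
    (f g : (Fin n → Bool) → ℝ) (hg : Mono g) (hfg : ∀ x, |f x| ≤ g x) (S : Fin n → Bool) :
    UW (fc p s n f) S ≤ (4 * s ^ 2) ^ sz S *
      Ep p (fun x => g (fun i => if S i then true else x i) ^ 2) := by
  induction n with
  | zero =>
    have h := hfg default
    have := sq_le_sq' (by linarith [abs_nonneg (f default), neg_abs_le (f default)]) ((le_abs_self _).trans h)
    simp [Ep_zero, UW, sz, fc]
    have e1 : ∀ z : Fin 0 → Bool, z = default := fun z => Subsingleton.elim _ _
    simp only [e1] at *
    exact this
  | succ n ih =>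
    obtain ⟨b, S, rfl⟩ : ∃ b y, S = Fin.cons b y := ⟨S 0, Fin.tail S, (Fin.cons_self_tail S).symm⟩
    have hcons : ∀ (b b' : Bool) (x : Fin n → Bool),
        (fun i => if (Fin.cons b S : Fin (n+1) → Bool) i then true else
          (Fin.cons b' x : Fin (n+1) → Bool) i) =
        (Fin.cons (if b then true else b') (fun i => if S i then true else x i) :
          Fin (n+1) → Bool) := by
      intro b b' x
      funext i; refine Fin.cases ?_ (fun j => ?_) i <;> simp
    rw [Ep_cons]
    simp only [hcons, sz_cons]
    cases b with
    | false =>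
      rw [UW_cons_false]
      have i1 := ih (fun x => f (Fin.cons true x)) (fun x => g (Fin.cons true x))
        (hg.cons true) (fun x => hfg _) S
      have i0 := ih (fun x => f (Fin.cons false x)) (fun x => g (Fin.cons false x))
        (hg.cons false) (fun x => hfg _) S
      have e : UW (fun S => fc p s (n+1) f (Fin.cons false S)) S +
          UW (fun S => fc p s (n+1) f (Fin.cons true S)) S =
          p * UW (fc p s n (fun x => f (Fin.cons true x))) S +
          (1 - p) * UW (fc p s n (fun x => f (Fin.cons false x))) S := by
        simp only [UW, Finset.mul_sum, ← Finset.sum_add_distrib]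
        refine Finset.sum_congr rfl fun T _ => ?_
        rw [← mul_add, fc_sq p s hs]; ring
      rw [e]
      have j1 := mul_le_mul_of_nonneg_left i1 h0
      have j0 := mul_le_mul_of_nonneg_left i0 (sub_nonneg.2 h1)
      simp only [Bool.false_eq_true, if_false, zero_add]
      linarith
    | true =>
      rw [UW_cons_true]
      simp only [fc_cons_true]
      rw [UW_mul]
      have i1 := ih (fun x => 1 * f (Fin.cons true x) + (-1) * f (Fin.cons false x))
        (fun x => 2 * g (Fin.cons true x))
        (fun x y h => by have := hg.cons true x y h; simp only at *; linarith)
        (fun x => by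
          have a1 := abs_le.1 (hfg (Fin.cons true x))
          have a2 := abs_le.1 (hfg (Fin.cons false x))
          have a3 : g (Fin.cons false x) ≤ g (Fin.cons true x) :=
            hg _ _ (cons_le (by simp) fun i => le_rfl)
          rw [abs_le]
          constructor <;> linarith [a1.1, a1.2, a2.1, a2.2]) S
      have e : fc p s n (fun x => 1 * f (Fin.cons true x) + (-1) * f (Fin.cons false x)) =
          fun S => fc p s n (fun x => f (Fin.cons true x)) S -
            fc p s n (fun x => f (Fin.cons false x)) S := by
        funext T
        rw [fc_lin p s (fun x => f (Fin.cons true x)) (fun x => f (Fin.cons false x))]; ring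
      rw [e] at i1
      simp only [mul_pow (2:ℝ) _ 2, Ep_mul] at i1
      refine (mul_le_mul_of_nonneg_left i1 (sq_nonneg s)).trans (le_of_eq ?_)
      simp [pow_add]
      ring

/-- Russo's formula combined with the spectral formula for the influence. -/
theorem russo (p s : ℝ) (hs : s ^ 2 = p * (1 - p)) (hs0 : s ≠ 0) (f : (Fin n → Bool) → ℝ)
    (hf : ∀ x, f x = 0 ∨ f x = 1) (hm : Mono f) :
    ∃ D, HasDerivAt (fun x => Ep x f) D p ∧
      s ^ 2 * D = ∑ S, (sz S : ℝ) * fc p s n f S ^ 2 := by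
  induction n with
  | zero =>
    refine ⟨0, ?_, by simp [sz]⟩
    simp only [Ep_zero]
    exact hasDerivAt_const _ _
  | succ n ih =>
    obtain ⟨D1, d1, e1⟩ := ih (fun x => f (Fin.cons true x)) (fun x => hf _) (hm.cons true)
    obtain ⟨D0, d0, e0⟩ := ih (fun x => f (Fin.cons false x)) (fun x => hf _) (hm.cons false)
    have hd := ((hasDerivAt_id p).mul d1).add (((hasDerivAt_id p).const_sub 1).mul d0)
    refine ⟨((1 * Ep p fun x => f (Fin.cons true x)) + id p * D1 +
      ((-1 * Ep p fun x => f (Fin.cons false x)) + (1 - id p) * D0)), ?_, ?_⟩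
    · have e : (fun x => Ep x f) = ((id * fun x => Ep x fun x => f (Fin.cons true x)) +
          (fun x => 1 - id x) * fun x => Ep x fun x => f (Fin.cons false x)) := by
        funext x
        rw [Ep_cons]; rfl
      rw [e]
      exact hd
    · have q1 : p * ch p s true + (1 - p) * ch p s false = 0 := by
        simp [ch]; field_simp; ring
      have q2 : p * ch p s true ^ 2 + (1 - p) * ch p s false ^ 2 = 1 := by
        simp [ch, div_pow, hs]
        have : p * (1 - p) ≠ 0 := by rw [← hs]; positivity
        rw [← mul_div_assoc, ← mul_div_assoc, ← add_div, div_eq_one_iff_eq this]; ring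
      set a1 := fc p s n (fun x => f (Fin.cons true x)) with ha1
      set a0 := fc p s n (fun x => f (Fin.cons false x)) with ha0
      have P := parseval p (ch p s) q1 q2 (fun S => 1 * a1 S + (-1) * a0 S)
        (fun S => 1 * a1 S + (-1) * a0 S)
      simp only [ML_lin, ha1, ha0, ML_fc p s hs0] at P
      have F : ∀ x, (1 * f (Fin.cons true x) + -1 * f (Fin.cons false x)) *
          (1 * f (Fin.cons true x) + -1 * f (Fin.cons false x)) =
          f (Fin.cons true x) + (-1) * f (Fin.cons false x) := by
        intro x
        have a3 : f (Fin.cons false x) ≤ f (Fin.cons true x) :=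
            hm _ _ (cons_le (by simp) fun i => le_rfl)
        rcases hf (Fin.cons true x) with h | h <;> rcases hf (Fin.cons false x) with h' | h' <;>
          simp only [h, h'] at a3 ⊢ <;> first | linarith | norm_num
      simp only [F] at P
      rw [Ep_add, Ep_mul, ← ha1, ← ha0] at P
      rw [sum_cons]
      have E : ∑ x : Fin n → Bool, (sz (Fin.cons true x : Fin (n+1) → Bool) : ℝ) *
            fc p s (n + 1) f (Fin.cons true x) ^ 2 +
          ∑ x : Fin n → Bool, (sz (Fin.cons false x : Fin (n+1) → Bool) : ℝ) *
            fc p s (n + 1) f (Fin.cons false x) ^ 2 =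
          s ^ 2 * ∑ S, (1 * a1 S + -1 * a0 S) * (1 * a1 S + -1 * a0 S) +
          p * ∑ S, (sz S : ℝ) * a1 S ^ 2 + (1 - p) * ∑ S, (sz S : ℝ) * a0 S ^ 2 := by
        simp only [Finset.mul_sum, ← Finset.sum_add_distrib]
        refine Finset.sum_congr rfl fun T _ => ?_
        have h := fc_sq p s hs f T
        have h' := fc_cons_true p s f T
        rw [← ha1, ← ha0] at h h'
        simp only [sz_cons]
        push_cast
        have h2 : fc p s (n + 1) f (Fin.cons true T) ^ 2 = s ^ 2 * (a1 T - a0 T) ^ 2 := by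
          rw [h']; ring
        simp
        linear_combination (sz T : ℝ) * h + h2
      rw [E, ← P, ← e1, ← e0]
      simp only [id]
      ring

/-! ### The level-`d` inequality -/

theorem level (p s : ℝ) (hs : s ^ 2 = p * (1 - p)) (hs0 : 0 < s) (h0 : 0 ≤ p) (h1 : p ≤ 1)
    (f : (Fin n → Bool) → ℝ) (hf : ∀ x, f x = 0 ∨ f x = 1) (hm : Mono f) (d : ℕ) (β : ℝ)
    (hβ : ∀ S : Fin n → Bool, sz S ≤ d →
      Ep p (fun x => f (fun i => if S i then true else x i)) ≤ β) :
    (∑ S, if sz S ≤ d then fc p s n f S ^ 2 else 0) ^ 4 ≤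
      Ep p f ^ 3 * (128 ^ d * β * ∑ S, if sz S ≤ d then fc p s n f S ^ 2 else 0) := by
  have hpp : p * (1 - p) ≠ 0 := by rw [← hs]; positivity
  have hps : p * (1 - p) = s ^ 2 := hs.symm
  have q1 : p * ch p s true + (1 - p) * ch p s false = 0 := by
    simp [ch]; field_simp; ring
  have q2 : p * ch p s true ^ 2 + (1 - p) * ch p s false ^ 2 = 1 := by
    simp [ch, div_pow, hs]
    rw [← mul_div_assoc, ← mul_div_assoc, ← add_div, div_eq_one_iff_eq hpp]; ring
  set a := fc p s n f with ha
  set W := ∑ S, if sz S ≤ d then a S ^ 2 else 0 with hW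
  set t : (Fin n → Bool) → ℝ := fun S => if sz S ≤ d then a S else 0 with ht
  set t2 : (Fin n → Bool) → ℝ := fun S => 2 ^ sz S * t S with ht2
  set g := ML (ch p s) t with hg
  set φ : Bool → ℝ := fun b => ch p s b / 2 with hφ
  have hW0 : 0 ≤ W := Finset.sum_nonneg fun S _ => by split_ifs <;> positivity
  have hβ0 : 0 ≤ β := by
    refine le_trans (Ep_nonneg h0 h1 fun x => ?_) (hβ (fun _ => false) (by simp [sz]))
    rcases hf (fun i => if (false : Bool) then true else x i) with h | h <;> rw [h] <;> norm_num
  -- the inner product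
  have A1 : Ep p (fun x => f x * g x) = W := by
    have := parseval p (ch p s) q1 q2 a t
    simp only [ha, ML_fc p s hs0.ne'] at this
    rw [hg, this, hW]
    refine Finset.sum_congr rfl fun S _ => ?_
    simp only [ht]; split_ifs <;> ring
  have ff : ∀ x, f x ^ 2 = f x := fun x => by rcases hf x with h | h <;> rw [h] <;> norm_num
  have hE0 : 0 ≤ Ep p f := Ep_nonneg h0 h1 fun x => by rw [← ff]; positivity
  -- Hoelder
  have A2 : W ^ 4 ≤ Ep p f ^ 3 * Ep p (fun x => g x ^ 2 * g x ^ 2) := by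
    have c1 := Ep_cs h0 h1 f (fun x => f x * g x)
    have c2 := Ep_cs h0 h1 f (fun x => g x ^ 2)
    have r1 : ∀ x, f x * (f x * g x) = f x * g x := fun x => by rw [← mul_assoc, ← sq, ff]
    simp only [r1, mul_pow, ff, A1] at c1
    simp only [ff] at c2
    have r2 : (fun x => (g x ^ 2) ^ 2) = fun x => g x ^ 2 * g x ^ 2 := by funext x; ring
    rw [r2] at c2
    have c3 : (W ^ 2) ^ 2 ≤ (Ep p f * Ep p fun x => f x * g x ^ 2) ^ 2 := by
      gcongr
    calc W ^ 4 = (W ^ 2) ^ 2 := by ring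
      _ ≤ _ := c3
      _ = Ep p f ^ 2 * (Ep p fun x => f x * g x ^ 2) ^ 2 := by ring
      _ ≤ Ep p f ^ 2 * (Ep p f * Ep p fun x => g x ^ 2 * g x ^ 2) := by gcongr
      _ = _ := by ring
  refine A2.trans (mul_le_mul_of_nonneg_left ?_ (by positivity))
  -- hypercontractivity
  have gg : ∀ x, g x = ML φ t2 x := by
    intro x
    simp only [hg, ML]
    refine Finset.sum_congr rfl fun S _ => ?_
    have : (∏ i, if S i then ch p s (x i) else 1) =
        (∏ i, if S i then φ (x i) else 1) * 2 ^ sz S := by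
      rw [sz, ← Finset.prod_pow_eq_pow_sum, ← Finset.prod_mul_distrib]
      refine Finset.prod_congr rfl fun i _ => ?_
      split_ifs <;> simp [hφ]
    rw [this]; simp only [ht2]; ring
  have H := hyper p (1 / s ^ 2) φ h0 h1 (by simp only [hφ]; linarith)
    (by simp only [hφ]; linarith)
    (by simp only [hφ, ch, div_pow]; rw [div_div, div_le_div_iff₀ (by positivity) (by positivity)]
        simp; nlinarith [sq_nonneg s])
    (by simp only [hφ, ch, div_pow]; rw [div_div, div_le_div_iff₀ (by positivity) (by positivity)]
        simp; nlinarith [sq_nonneg s]) t2 t2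
  simp only [gg]
  refine H.trans ?_
  have U : ∀ S, (1 / s ^ 2) ^ sz S * (UW t2 S * UW t2 S) ≤ (16 ^ d * β) * UW t2 S := by
    intro S
    rw [← mul_assoc]
    refine mul_le_mul_of_nonneg_right ?_ (UW_nonneg _ _)
    by_cases hS : sz S ≤ d
    · have u1 : UW t2 S ≤ UW (fun T => 2 ^ d * a T) S := by
        refine UW_mono (fun T => ?_) S
        simp only [ht2, ht]
        split_ifs with h
        · rw [mul_pow, mul_pow]
          gcongr
          norm_num
        · simp; positivity
      rw [UW_mul] at u1
      have u2 := UW_le p s hs h0 h1 f f hm (fun x => by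
        rcases hf x with h | h <;> rw [h] <;> norm_num) S
      simp only [ff] at u2
      have u3 := hβ S hS
      have u4 : UW a S ≤ (4 * s ^ 2) ^ sz S * β :=
        u2.trans (mul_le_mul_of_nonneg_left u3 (by positivity))
      calc (1 / s ^ 2) ^ sz S * UW t2 S
          ≤ (1 / s ^ 2) ^ sz S * ((2 ^ d) ^ 2 * ((4 * s ^ 2) ^ sz S * β)) := by
            gcongr
            exact u1.trans (by gcongr)
        _ = (2 ^ d) ^ 2 * (4 ^ sz S * β) := by
            have : (1 / s ^ 2) ^ sz S * (s ^ 2) ^ sz S = 1 := by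
              rw [← mul_pow, one_div_mul_cancel (by positivity), one_pow]
            rw [mul_pow]
            linear_combination ((2 ^ d) ^ 2 * 4 ^ sz S * β) * this
        _ ≤ (2 ^ d) ^ 2 * (4 ^ d * β) := by
            gcongr
            norm_num
        _ = _ := by
            rw [← pow_mul, mul_comm d 2, pow_mul, ← mul_assoc, ← mul_pow]; norm_num
    · have : UW t2 S = 0 := by
        unfold UW
        refine Finset.sum_eq_zero fun T _ => ?_
        by_cases hT : sz T ≤ d
        · have : ∃ i, S i = true ∧ T i = false := by
            by_contra! hc
            apply hS
            refine le_trans (Finset.sum_le_sum fun i _ => ?_) hT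
            specialize hc i
            by_cases hi : S i = true
            · have := hc hi
              simp at this
              simp [hi, this]
            · simp [hi]
          obtain ⟨i, hi, hi'⟩ := this
          rw [Finset.prod_eq_zero (Finset.mem_univ i) (by simp [hi, hi']), zero_mul]
        · simp [ht2, ht, hT]
      rw [this]; simp; positivity
  refine (Finset.sum_le_sum fun S _ => U S).trans ?_
  rw [← Finset.mul_sum, sum_UW]
  have V : ∑ T, 2 ^ sz T * t2 T ^ 2 ≤ 8 ^ d * W := by
    rw [hW, Finset.mul_sum]
    refine Finset.sum_le_sum fun T _ => ?_
    simp only [ht2, ht]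
    split_ifs with h
    · have : (2:ℝ) ^ sz T * (2 ^ sz T * a T) ^ 2 = 8 ^ sz T * a T ^ 2 := by
        rw [mul_pow, ← pow_mul, mul_comm (sz T) 2, pow_mul, ← mul_assoc, ← mul_pow]; norm_num
      rw [this]
      gcongr
      norm_num
    · simp
  refine (mul_le_mul_of_nonneg_left V (by positivity)).trans (le_of_eq ?_)
  have : (128:ℝ) ^ d = 16 ^ d * 8 ^ d := by rw [← mul_pow]; norm_num
  rw [this]; ring

/-- Isoperimetric inequality for global monotone functions. -/
theorem isop (p s : ℝ) (hs : s ^ 2 = p * (1 - p)) (hs0 : 0 < s) (h0 : 0 ≤ p) (h1 : p ≤ 1)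
    (f : (Fin n → Bool) → ℝ) (hf : ∀ x, f x = 0 ∨ f x = 1) (hm : Mono f) (M : ℝ)
    (hμ0 : 0 < Ep p f) (hμ : Ep p f ≤ 1 / 2) (hM : -Real.log (Ep p f) ≤ M)
    (hgl : ∀ J : Finset (Fin n), (J.card : ℝ) ≤ M →
            Ep p (restrict1 J f) ≤ Ep p f ^ ((0.01 : ℝ))) :
    1 / 2000 * (Ep p f * -Real.log (Ep p f)) ≤ ∑ S, (sz S : ℝ) * fc p s n f S ^ 2 := by
  have q1 : p * ch p s true + (1 - p) * ch p s false = 0 := by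
    simp [ch]; field_simp; ring
  have q2 : p * ch p s true ^ 2 + (1 - p) * ch p s false ^ 2 = 1 := by
    have hpp : p * (1 - p) ≠ 0 := by rw [← hs]; positivity
    simp [ch, div_pow, hs]
    rw [← mul_div_assoc, ← mul_div_assoc, ← add_div, div_eq_one_iff_eq hpp]; ring
  set μ := Ep p f with hμd
  set L := -Real.log μ with hL
  have hL0 : 0 ≤ L := by
    rw [hL]; have := Real.log_nonpos hμ0.le (by linarith); linarith
  set d := ⌊L / 1000⌋₊ with hd
  have hd1 : (d : ℝ) ≤ L / 1000 := Nat.floor_le (by positivity)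
  have hd2 : L / 1000 < d + 1 := Nat.lt_floor_add_one _
  have ff : ∀ x, f x ^ 2 = f x := fun x => by rcases hf x with h | h <;> rw [h] <;> norm_num
  have lev := level p s hs hs0 h0 h1 f hf hm d (μ ^ (0.01:ℝ)) (by
    intro S hS
    have := hgl (Finset.univ.filter fun i => S i = true) (by
      have e : (Finset.univ.filter fun i => S i = true).card = sz S := by
        rw [Finset.card_filter]; rfl
      rw [e]
      have : (sz S : ℝ) ≤ d := by exact_mod_cast hS
      linarith)
    unfold restrict1 at this
    simpa only [Finset.mem_filter, Finset.mem_univ, true_and] using this)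
  set a := fc p s n f with ha
  set W := ∑ S, if sz S ≤ d then a S ^ 2 else 0 with hW
  have hW0 : 0 ≤ W := Finset.sum_nonneg fun S _ => by split_ifs <;> positivity
  have tot : ∑ S, a S ^ 2 = μ := by
    have := parseval p (ch p s) q1 q2 a a
    simp only [ha, ML_fc p s hs0.ne'] at this
    simp only [← sq, ff] at this
    rw [hμd, this]
  have hWμ : W ≤ μ / 2 := by
    rcases Nat.eq_zero_or_pos d with hd0 | hdpos
    · have : W = μ ^ 2 := by
        rw [hW, Finset.sum_eq_single (fun _ => false)]
        · rw [ha, fc_zero]; simp [sz, hμd]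
        · intro T _ hT
          rw [if_neg]
          rw [hd0]
          intro h
          apply hT
          funext i
          have h' := (Finset.sum_eq_zero_iff.1 (Nat.le_zero.1 h)) i (Finset.mem_univ i)
          simpa using h'
        · simp
      rw [this]; nlinarith
    · by_contra! hc
      have hWpos : 0 < W := by linarith
      have c1 : W ^ 3 ≤ μ ^ 3 * (128 ^ d * μ ^ (0.01:ℝ)) := by
        refine le_of_mul_le_mul_right ?_ hWpos
        calc W ^ 3 * W = W ^ 4 := by ring
          _ ≤ _ := lev
          _ = _ := by ring
      have c2 : (μ / 2) ^ 3 < W ^ 3 := by gcongr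
      have c3 : 1 < 8 * (128 ^ d * μ ^ (0.01:ℝ)) := by
        have : 0 < μ ^ 3 := by positivity
        have h3 : μ ^ 3 * 1 < μ ^ 3 * (8 * (128 ^ d * μ ^ (0.01:ℝ))) := by
          have : (μ / 2) ^ 3 = μ ^ 3 / 8 := by ring
          linarith
        exact lt_of_mul_lt_mul_left h3 this.le
      have c4 : μ ^ (0.01:ℝ) = Real.exp (-(L / 100)) := by
        rw [Real.rpow_def_of_pos hμ0]; congr 1; rw [hL]; ring
      have c5 : (8:ℝ) * 128 ^ d ≤ Real.exp (10 * d) := by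
        have e1 : (8:ℝ) ≤ 8 ^ d := le_self_pow₀ (by norm_num) hdpos.ne'
        have e2 : (2:ℝ) ≤ Real.exp 1 := by have := Real.add_one_le_exp (1:ℝ); linarith
        calc (8:ℝ) * 128 ^ d ≤ 8 ^ d * 128 ^ d := by gcongr
          _ = (2 ^ 10) ^ d := by rw [← mul_pow]; norm_num
          _ ≤ (Real.exp 1 ^ 10) ^ d := by gcongr
          _ = Real.exp (10 * d) := by
            rw [← Real.exp_nat_mul, ← Real.exp_nat_mul]; congr 1; push_cast; ring
      have c6 : 8 * (128 ^ d * μ ^ (0.01:ℝ)) ≤ 1 := by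
        rw [← mul_assoc, c4]
        calc _ ≤ Real.exp (10 * d) * Real.exp (-(L / 100)) := by gcongr
          _ = Real.exp (10 * d - L / 100) := by rw [← Real.exp_add]; congr 1
          _ ≤ 1 := by rw [Real.exp_le_one_iff]; linarith
      linarith
  have fin : ((d : ℝ) + 1) * (μ - W) ≤ ∑ S, (sz S : ℝ) * a S ^ 2 := by
    rw [← tot, hW, ← Finset.sum_sub_distrib, Finset.mul_sum]
    refine Finset.sum_le_sum fun S _ => ?_
    split_ifs with h
    · simp; positivity
    · rw [sub_zero]
      have : ((d:ℝ) + 1) ≤ sz S := by exact_mod_cast not_le.1 h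
      gcongr
  refine le_trans ?_ fin
  have : L / 1000 * (μ / 2) ≤ ((d : ℝ) + 1) * (μ - W) := by
    refine mul_le_mul hd2.le (by linarith) (by linarith) (by positivity)
  linarith

/-- the sharp threshold theorem for global monotone functions
(Theorem 4.10 / Theorem 1.6). -/
theorem statement14 :
    ∃ C : ℝ, 1 ≤ C ∧
      ∀ (n : ℕ) (p q M : ℝ) (f : (Fin n → Bool) → ℝ),
        (∀ x, f x = 0 ∨ f x = 1) → Mono f →
        0 < p → p < q → q ≤ 1/2 → 0 < M →
        (∀ x : ℝ, p ≤ x → x ≤ q →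
          ∀ J : Finset (Fin n), (J.card : ℝ) ≤ M →
            Ep x (restrict1 J f) ≤ Ep x f ^ ((0.01 : ℝ))) →
        Ep q f ≤ 1/2 →
        Real.exp (-(M / C)) ≤ Ep p f →
        Ep p f ^ ((p / q) ^ (1 / C)) ≤ Ep q f ∧ q ≤ M ^ C * p := by
  refine ⟨2000, by norm_num, ?_⟩
  intro n p q M f hf hm hp hpq hq hM hgl hq2 hpM
  have hs : ∀ x, p ≤ x → x ≤ q → √(x * (1 - x)) ^ 2 = x * (1 - x) ∧ 0 < √(x * (1 - x)) := by
    intro x h1 h2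
    have : 0 < x * (1 - x) := mul_pos (by linarith) (by linarith)
    exact ⟨Real.sq_sqrt this.le, Real.sqrt_pos.2 this⟩
  have R : ∀ x, p ≤ x → x ≤ q → ∃ D, HasDerivAt (fun x => Ep x f) D x ∧
      √(x * (1 - x)) ^ 2 * D = ∑ S, (sz S : ℝ) * fc x (√(x * (1 - x))) n f S ^ 2 := by
    intro x h1 h2
    exact russo x _ (hs x h1 h2).1 (hs x h1 h2).2.ne' f hf hm
  have hcont : ContinuousOn (fun x => Ep x f) (Set.Icc p q) := fun x hx => by
    obtain ⟨D, hD, _⟩ := R x hx.1 hx.2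
    exact hD.continuousAt.continuousWithinAt
  have hmono : MonotoneOn (fun x => Ep x f) (Set.Icc p q) := by
    refine monotoneOn_of_deriv_nonneg (convex_Icc p q) hcont ?_ ?_
    · intro x hx
      rw [interior_Icc] at hx
      obtain ⟨D, hD, _⟩ := R x hx.1.le hx.2.le
      exact hD.differentiableAt.differentiableWithinAt
    · intro x hx
      rw [interior_Icc] at hx
      obtain ⟨D, hD, e⟩ := R x hx.1.le hx.2.le
      rw [hD.deriv]
      have h2 := (hs x hx.1.le hx.2.le).2
      have : 0 ≤ √(x * (1 - x)) ^ 2 * D := by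
        rw [e]; exact Finset.sum_nonneg fun S _ => by positivity
      exact nonneg_of_mul_nonneg_right this (by positivity)
  have hpmem : p ∈ Set.Icc p q := ⟨le_rfl, hpq.le⟩
  have hqmem : q ∈ Set.Icc p q := ⟨hpq.le, le_rfl⟩
  have hpos : 0 < Ep p f := (Real.exp_pos _).trans_le hpM
  have hxpos : ∀ x ∈ Set.Icc p q, 0 < Ep x f := fun x hx => hpos.trans_le (hmono hpmem hx hx.1)
  have hlogp : -Real.log (Ep p f) ≤ M / 2000 := by
    have := (Real.le_log_iff_exp_le hpos).2 hpM
    linarith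
  have hderiv : ∀ x ∈ Set.Icc p q, ∃ D, HasDerivAt (fun x => Ep x f) D x ∧
      1 / 2000 * (Ep x f * -Real.log (Ep x f)) ≤ x * D := by
    intro x hx
    obtain ⟨D, hD, e⟩ := R x hx.1 hx.2
    refine ⟨D, hD, ?_⟩
    have hle : Ep p f ≤ Ep x f := hmono hpmem hx hx.1
    have hle2 : Ep x f ≤ Ep q f := hmono hx hqmem hx.2
    have hx0 : 0 < x := hp.trans_le hx.1
    have hlog := Real.log_le_log hpos hle
    have I := isop x _ (hs x hx.1 hx.2).1 (hs x hx.1 hx.2).2 hx0.le (by linarith [hx.2]) f hf hm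
      M (hxpos x hx) (hle2.trans hq2) (by linarith) (fun J hJ => hgl x hx.1 hx.2 J hJ)
    rw [← e] at I
    have hD0 : 0 ≤ D := by
      have : 0 ≤ √(x * (1 - x)) ^ 2 * D := by
        rw [e]; exact Finset.sum_nonneg fun S _ => by positivity
      have h2 := (hs x hx.1 hx.2).2
      exact nonneg_of_mul_nonneg_right this (by positivity)
    rw [(hs x hx.1 hx.2).1] at I
    refine I.trans ?_
    have : 0 ≤ x * x * D := by positivity
    nlinarith
  have hanti : AntitoneOn (fun x => x ^ (1 / 2000 : ℝ) * -Real.log (Ep x f)) (Set.Icc p q) := by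
    have hd : ∀ x ∈ Set.Icc p q, ∃ D, HasDerivAt
        (fun x => x ^ (1 / 2000 : ℝ) * -Real.log (Ep x f)) D x ∧ D ≤ 0 := by
      intro x hx
      obtain ⟨D, hD, hI⟩ := hderiv x hx
      have hx0 : 0 < x := hp.trans_le hx.1
      have hμ := hxpos x hx
      refine ⟨_, (Real.hasDerivAt_rpow_const (p := (1/2000:ℝ)) (Or.inl hx0.ne')).mul
        (hD.log hμ.ne').neg, ?_⟩
      rw [Real.rpow_sub hx0, Real.rpow_one]
      have hr : 0 < x ^ (1 / 2000 : ℝ) := Real.rpow_pos_of_pos hx0 _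
      generalize x ^ (1 / 2000 : ℝ) = r at *
      have : 1 / 2000 * (r / x) * -Real.log (Ep x f) + r * -(D / Ep x f) =
          r / (x * Ep x f) * (1 / 2000 * (Ep x f * -Real.log (Ep x f)) - x * D) := by
        field_simp
        ring
      rw [this]
      exact mul_nonpos_of_nonneg_of_nonpos (by positivity) (by linarith)
    refine antitoneOn_of_deriv_nonpos (convex_Icc p q) ?_ ?_ ?_
    · intro x hx
      obtain ⟨D, hD, _⟩ := hd x hx
      exact hD.continuousAt.continuousWithinAt
    · intro x hx
      obtain ⟨D, hD, _⟩ := hd x (interior_subset hx)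
      exact hD.differentiableAt.differentiableWithinAt
    · intro x hx
      obtain ⟨D, hD, h⟩ := hd x (interior_subset hx)
      rw [hD.deriv]; exact h
  have hq0 : 0 < q := hp.trans hpq
  have key := hanti hpmem hqmem hpq.le
  simp only at key
  have hqr : 0 < q ^ (1 / 2000 : ℝ) := Real.rpow_pos_of_pos hq0 _
  have key2 : -Real.log (Ep q f) ≤ (p / q) ^ (1 / 2000 : ℝ) * -Real.log (Ep p f) := by
    rw [Real.div_rpow hp.le hq0.le, div_mul_eq_mul_div, le_div_iff₀ hqr]
    linarith
  refine ⟨?_, ?_⟩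
  · rw [Real.rpow_def_of_pos hpos, ← Real.le_log_iff_exp_le (hxpos q hqmem)]
    linarith
  · have l2 : Real.log 2 ≤ -Real.log (Ep q f) := by
      have := Real.log_le_log (hxpos q hqmem) hq2
      rw [one_div, Real.log_inv] at this
      linarith
    have l3 : (1:ℝ) / 2 ≤ Real.log 2 := by have := Real.log_two_gt_d9; linarith
    have hr : 0 < (p / q) ^ (1 / 2000 : ℝ) := Real.rpow_pos_of_pos (by positivity) _
    have l4 : (1:ℝ) / 2 ≤ (p / q) ^ (1 / 2000 : ℝ) * (M / 2000) :=
      (l3.trans l2).trans (key2.trans (mul_le_mul_of_nonneg_left hlogp hr.le))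
    have l5 : 1 ≤ (p / q) ^ (1 / 2000 : ℝ) * M := by linarith
    have l6 : (1:ℝ) ≤ ((p / q) ^ (1 / 2000 : ℝ) * M) ^ (2000:ℝ) :=
      Real.one_le_rpow l5 (by norm_num)
    rw [Real.mul_rpow hr.le hM.le, ← Real.rpow_mul (by positivity)] at l6
    norm_num at l6
    rw [div_mul_eq_mul_div, le_div_iff₀ hq0] at l6
    norm_num
    linarith

end GlobalHC
end

section
/- Let f : {0,1}^n → {0,1} be a monotone Boolean function with μ_p(f) > 0, let 0 < p < q < 1, and let ρ = p(1−q)/(q(1−p)). Then μ_q(f) ≥ μ_p(f)²/Stab_ρ(f), where Stab_ρ is taken with respect to the p-biased measure μ_p. -/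
open Finset

namespace GlobalHC

variable {n : ℕ}

/-- One-coordinate coupling weight of `μ_p` and `μ_q`. -/
noncomputable def cw (p q : ℝ) (a c : Bool) : ℝ :=
  if c then (if a then p else q - p) else (if a then 0 else 1 - q)

/-- One-coordinate biased weight. -/
noncomputable def bw (p : ℝ) (a : Bool) : ℝ := if a then p else 1 - p

lemma one_coord (p q : ℝ) (hp : 0 < p) (hpq : p < q) (hq : q < 1) (a b : Bool) :
    bw p a * bw p b * (1 + p * (1 - q) / (q * (1 - p)) *
      ((((if a then (1 : ℝ) else 0) - p) / Real.sqrt (p * (1 - p))) *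
       (((if b then (1 : ℝ) else 0) - p) / Real.sqrt (p * (1 - p))))) =
    ∑ c : Bool, cw p q a c * cw p q b c / bw q c := by
  have h1 : 0 < 1 - p := by linarith
  have h2 : 0 < 1 - q := by linarith
  have h3 : 0 < q := by linarith
  rw [div_mul_div_comm, Real.mul_self_sqrt (by positivity)]
  cases a <;> cases b <;> simp [bw, cw] <;> field_simp <;> ring

lemma marg (p q : ℝ) (a : Bool) : ∑ c : Bool, cw p q a c = bw p a := by
  cases a <;> simp [bw, cw]

lemma prod_sum_bool (F : Fin n → Bool → ℝ) :
    ∑ y : Fin n → Bool, ∏ i, F i (y i) = ∏ i, ∑ c : Bool, F i c := by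
  rw [Finset.prod_univ_sum, Fintype.piFinset_univ]

lemma stab_eq (p q : ℝ) (hp : 0 < p) (hpq : p < q) (hq : q < 1)
    (f : (Fin n → Bool) → ℝ) :
    stab p (p * (1 - q) / (q * (1 - p))) f =
      ∑ y : Fin n → Bool, (∑ x : Fin n → Bool, (∏ i, cw p q (x i) (y i)) * f x) ^ 2 /
        (∏ i, bw q (y i)) := by
  have hR : ∀ y : Fin n → Bool,
      (∑ x : Fin n → Bool, (∏ i, cw p q (x i) (y i)) * f x) ^ 2 / (∏ i, bw q (y i)) =
      ∑ x : Fin n → Bool, ∑ z : Fin n → Bool, f x * f z *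
        ∏ i, (cw p q (x i) (y i) * cw p q (z i) (y i) / bw q (y i)) := by
    intro y
    rw [sq, Finset.sum_mul_sum, Finset.sum_div]
    refine Finset.sum_congr rfl fun x _ => ?_
    rw [Finset.sum_div]
    refine Finset.sum_congr rfl fun z _ => ?_
    rw [Finset.prod_div_distrib, Finset.prod_mul_distrib]
    ring
  simp_rw [hR]
  rw [Finset.sum_comm]
  set ρ := p * (1 - q) / (q * (1 - p)) with hρ
  have hL : ∀ S : Finset (Fin n), ρ ^ S.card * coeff p f S ^ 2 =
      ∑ x : Fin n → Bool, ∑ z : Fin n → Bool, f x * f z *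
        ((∏ i, bw p (x i) * bw p (z i)) * ∏ i ∈ S, (ρ *
      ((((if x i then (1 : ℝ) else 0) - p) / Real.sqrt (p * (1 - p))) *
       (((if z i then (1 : ℝ) else 0) - p) / Real.sqrt (p * (1 - p)))))) := by
    intro S
    unfold coeff Ep chi
    rw [sq, Finset.sum_mul_sum, Finset.mul_sum]
    refine Finset.sum_congr rfl fun x _ => ?_
    rw [Finset.mul_sum]
    refine Finset.sum_congr rfl fun z _ => ?_
    rw [Finset.prod_mul_distrib, Finset.prod_mul_distrib, Finset.prod_mul_distrib,
      Finset.prod_const]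
    unfold bw
    ring
  unfold stab
  simp_rw [hL]
  rw [Finset.sum_comm]
  refine Finset.sum_congr rfl fun x _ => ?_
  refine Finset.sum_comm.trans (Eq.trans ?_ Finset.sum_comm)
  refine Finset.sum_congr rfl fun z _ => ?_
  rw [← Finset.mul_sum, ← Finset.mul_sum, ← Finset.mul_sum,
    prod_sum_bool (fun i c => cw p q (x i) c * cw p q (z i) c / bw q c)]
  congr 1
  rw [← Finset.powerset_univ, ← Finset.prod_one_add, ← Finset.prod_mul_distrib]
  exact Finset.prod_congr rfl fun i _ => one_coord p q hp hpq hq (x i) (z i)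

/-- noise sensitivity implies a sharp threshold (Proposition 5.5). -/
theorem statement16 {n : ℕ} (p q ρ : ℝ) (hp : 0 < p) (hpq : p < q) (hq : q < 1)
    (hρ : ρ = p * (1 - q) / (q * (1 - p)))
    (f : (Fin n → Bool) → ℝ) (hbool : ∀ x, f x = 0 ∨ f x = 1)
    (hmono : Mono f) (hpos : 0 < Ep p f) :
    Ep p f ^ 2 / stab p ρ f ≤ Ep q f := by
  subst hρ
  have h1 : 0 < 1 - p := by linarith
  have h2 : 0 < 1 - q := by linarith
  have h3 : 0 < q := by linarith
  have hf0 : ∀ x, 0 ≤ f x := fun x => by rcases hbool x with h | h <;> rw [h] <;> norm_num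
  have hbw : ∀ y : Fin n → Bool, 0 < ∏ i, bw q (y i) := fun y =>
    Finset.prod_pos fun i _ => by unfold bw; split_ifs <;> assumption
  have hq0 : 0 ≤ Ep q f := Finset.sum_nonneg fun y _ => mul_nonneg (hbw y).le (hf0 y)
  have hs0 : 0 ≤ stab p (p * (1 - q) / (q * (1 - p))) f :=
    Finset.sum_nonneg fun S _ => by positivity
  refine div_le_of_le_mul₀ hs0 hq0 ?_
  have hE : Ep p f = ∑ y : Fin n → Bool, ∑ x : Fin n → Bool,
      (∏ i, cw p q (x i) (y i)) * f x := by
    rw [Finset.sum_comm]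
    unfold Ep
    refine Finset.sum_congr rfl fun x _ => ?_
    rw [← Finset.sum_mul, prod_sum_bool (fun i c => cw p q (x i) c)]
    simp_rw [marg]
    rfl
  rw [stab_eq p q hp hpq hq, hE]
  unfold Ep
  refine Finset.sum_sq_le_sum_mul_sum_of_sq_eq_mul _
    (fun y _ => mul_nonneg (hbw y).le (hf0 y))
    (fun y _ => div_nonneg (sq_nonneg _) (hbw y).le) fun y _ => ?_
  change _ = (∏ i, bw q (y i)) * f y * _
  have hne := (hbw y).ne'
  rcases hbool y with h | h
  · rw [h, Finset.sum_eq_zero]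
    · simp
    intro x _
    by_cases hxy : ∀ i, x i ≤ y i
    · have := hmono x y hxy
      rw [le_antisymm (this.trans h.le) (hf0 x), mul_zero]
    · push Not at hxy
      obtain ⟨i, hi⟩ := hxy
      rw [Finset.prod_eq_zero (Finset.mem_univ i), zero_mul]
      revert hi
      cases x i <;> cases y i <;> simp [cw]
  · rw [h]
    field_simp

end GlobalHC
end

section
/- Let q ≥ 1 be an integer, and let (Ω,ν) = ∏_{t=1}^n (Ω_t,ν_t) be a finite product of finite probability spaces, where every atom of ν_i has probability at least p_i ∈ (0,1/2); set σ_i = √(p_i(1−p_i)) and σ_T = ∏_{i∈T} σ_i for T ⊆ [n]. Let f_1,…,f_q ∈ L²(Ω,ν) and S_1,…,S_q ⊆ [n] be such that each f_i depends only on the coordinates in S_i. For 3 ≤ j ≤ q, let T_j be the set of coordinates that belong to exactly j of the sets S_1,…,S_q. Then |𝔼[∏_{i=1}^q f_i]| ≤ (∏_{i=1}^q ‖f_i‖₂)·∏_{j=3}^q σ_{T_j}^{2−j}. -/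
open Finset

lemma aux_cs {α : Type*} [Fintype α] (w : α → ℝ) (hw : ∀ a, 0 ≤ w a) (g h : α → ℝ) :
    ∑ a, w a * (g a * h a) ≤
      Real.sqrt (∑ a, w a * g a ^ 2) * Real.sqrt (∑ a, w a * h a ^ 2) := by
  have := Real.sum_mul_le_sqrt_mul_sqrt univ (fun a => Real.sqrt (w a) * g a)
    (fun a => Real.sqrt (w a) * h a)
  simp only [mul_pow, Real.sq_sqrt (hw _)] at this
  refine le_trans (le_of_eq ?_) this
  refine Finset.sum_congr rfl fun a _ => ?_
  have := Real.mul_self_sqrt (hw a)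
  linear_combination (-(g a * h a)) * this

lemma aux_one {α ι : Type*} [Fintype α] [Fintype ι] [DecidableEq ι] (w : α → ℝ) (p : ℝ)
    (hp : 0 < p) (hp' : p < 1/2) (hatom : ∀ a, p ≤ w a) (hsum : ∑ a, w a = 1)
    (J : Finset ι) (g : ι → α → ℝ) (hg : ∀ i a, 0 ≤ g i a)
    (hJ : ∀ i, i ∉ J → ∀ a b, g i a = g i b) :
    ∑ a, w a * ∏ i, g i a ≤
      (if 3 ≤ J.card then Real.sqrt (p * (1 - p)) ^ ((2 : ℤ) - (J.card : ℤ)) else 1) *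
      ∏ i, Real.sqrt (∑ a, w a * g i a ^ 2) := by
  have hw : ∀ a, 0 ≤ w a := fun a => hp.le.trans (hatom a)
  set N : ι → ℝ := fun i => Real.sqrt (∑ a, w a * g i a ^ 2) with hN
  have hN0 : ∀ i, 0 ≤ N i := fun i => Real.sqrt_nonneg _
  set s := Real.sqrt (p * (1 - p)) with hs
  have hs0 : 0 < s := Real.sqrt_pos.2 (by nlinarith)
  have hs2 : s ^ 2 = p * (1 - p) := Real.sq_sqrt (by nlinarith)
  have hconst : ∀ i, i ∉ J → ∀ a, g i a = N i := by
    intro i hi a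
    have : ∑ b, w b * g i b ^ 2 = g i a ^ 2 := by
      rw [Finset.sum_congr rfl fun b _ => by rw [hJ i hi b a], ← Finset.sum_mul, hsum, one_mul]
    simp only [hN]
    rw [this, Real.sqrt_sq (hg i a)]
  have hsup : ∀ i a, g i a ≤ N i * s⁻¹ := by
    intro i a
    rw [← div_eq_mul_inv, le_div_iff₀ hs0]
    apply Real.le_sqrt_of_sq_le
    calc (g i a * s) ^ 2 = s ^ 2 * g i a ^ 2 := by ring
      _ ≤ w a * g i a ^ 2 := by
        apply mul_le_mul_of_nonneg_right _ (sq_nonneg _)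
        rw [hs2]; nlinarith [hatom a]
      _ ≤ _ := Finset.single_le_sum (f := fun a => w a * g i a ^ 2)
        (fun b _ => mul_nonneg (hw b) (sq_nonneg _)) (Finset.mem_univ a)
  suffices h : ∑ a, w a * ∏ i ∈ J, g i a ≤
      (if 3 ≤ J.card then s ^ ((2 : ℤ) - (J.card : ℤ)) else 1) * ∏ i ∈ J, N i by
    have h1 : ∀ a, w a * ∏ i, g i a = (w a * ∏ i ∈ J, g i a) * ∏ i ∈ Jᶜ, N i := by
      intro a
      rw [← Finset.prod_mul_prod_compl J, mul_assoc]
      congr 2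
      exact Finset.prod_congr rfl fun i hi => hconst i (by simpa using hi) a
    rw [Finset.sum_congr rfl fun a _ => h1 a, ← Finset.sum_mul,
      ← Finset.prod_mul_prod_compl J N, ← mul_assoc]
    exact mul_le_mul_of_nonneg_right h (Finset.prod_nonneg fun i _ => hN0 i)
  rcases Nat.lt_or_ge J.card 2 with hc | hc
  · rw [if_neg (by omega), one_mul]
    rcases Nat.lt_or_ge J.card 1 with hc1 | hc1
    · have : J = ∅ := by rw [← Finset.card_eq_zero]; omega
      subst this
      simp [hsum]
    · obtain ⟨i, rfl⟩ := Finset.card_eq_one.1 (show J.card = 1 by omega)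
      have := aux_cs w hw (g i) (fun _ => 1)
      simpa [hsum] using this
  · obtain ⟨i, hi, k, hk, hik⟩ := Finset.one_lt_card.1 (show 1 < J.card by omega)
    set R := (J.erase i).erase k with hR
    have hk' : k ∈ J.erase i := Finset.mem_erase.2 ⟨hik.symm, hk⟩
    have hRc : R.card = J.card - 2 := by
      rw [hR, Finset.card_erase_of_mem hk', Finset.card_erase_of_mem hi]; omega
    have hsplit : ∀ F : ι → ℝ, ∏ l ∈ J, F l = F i * F k * ∏ l ∈ R, F l := by
      intro F
      rw [← Finset.mul_prod_erase J F hi, ← Finset.mul_prod_erase _ F hk', mul_assoc]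
    have hC : (if 3 ≤ J.card then s ^ ((2 : ℤ) - (J.card : ℤ)) else 1) = s⁻¹ ^ R.card := by
      have : s⁻¹ ^ R.card = s ^ ((2 : ℤ) - (J.card : ℤ)) := by
        rw [inv_pow, ← zpow_natCast, ← zpow_neg]
        congr 1
        rw [hRc]; push_cast [hc]; ring
      rw [this]
      split_ifs with h3
      · rfl
      · have : J.card = 2 := by omega
        simp [this]
    rw [hC, hsplit N]
    have hRb : ∀ a, ∏ l ∈ R, g l a ≤ s⁻¹ ^ R.card * ∏ l ∈ R, N l := by
      intro a
      calc ∏ l ∈ R, g l a ≤ ∏ l ∈ R, (N l * s⁻¹) :=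
            Finset.prod_le_prod (fun l _ => hg l a) fun l _ => hsup l a
        _ = _ := by rw [Finset.prod_mul_distrib, Finset.prod_const, mul_comm]
    calc ∑ a, w a * ∏ l ∈ J, g l a
        ≤ ∑ a, (w a * (g i a * g k a)) * (s⁻¹ ^ R.card * ∏ l ∈ R, N l) := by
          refine Finset.sum_le_sum fun a _ => ?_
          rw [hsplit (fun l => g l a), ← mul_assoc]
          exact mul_le_mul_of_nonneg_left (hRb a)
            (mul_nonneg (hw a) (mul_nonneg (hg i a) (hg k a)))
      _ = (∑ a, w a * (g i a * g k a)) * (s⁻¹ ^ R.card * ∏ l ∈ R, N l) := by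
          rw [Finset.sum_mul]
      _ ≤ (N i * N k) * (s⁻¹ ^ R.card * ∏ l ∈ R, N l) := by
          apply mul_le_mul_of_nonneg_right (aux_cs w hw (g i) (g k))
          exact mul_nonneg (by positivity) (Finset.prod_nonneg fun i _ => hN0 i)
      _ = _ := by ring

lemma aux_sum {n : ℕ} (Ω : Fin (n+1) → Type*) [∀ t, Fintype (Ω t)]
    (w : ∀ t, Ω t → ℝ) (F : (∀ t, Ω t) → ℝ) :
    ∑ x : ∀ t, Ω t, (∏ t, w t (x t)) * F x =
      ∑ y : ∀ t : Fin n, Ω t.succ, (∏ t, w t.succ (y t)) *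
        ∑ a, w 0 a * F (Fin.cons a y) := by
  rw [← (Fin.consEquiv Ω).sum_comp, Fintype.sum_prod_type_right]
  refine Finset.sum_congr rfl fun y _ => ?_
  rw [Finset.mul_sum]
  refine Finset.sum_congr rfl fun a _ => ?_
  simp only [Fin.consEquiv, Equiv.coe_fn_mk, Fin.prod_univ_succ, Fin.cons_zero, Fin.cons_succ]
  ring

lemma aux_main {ι : Type*} [Fintype ι] : ∀ (n : ℕ)
    (Ω : Fin n → Type*) [∀ t, Fintype (Ω t)]
    (w : ∀ t, Ω t → ℝ) (_ : ∀ t a, 0 ≤ w t a)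
    (D : ι → Fin n → Prop) (C : Fin n → ℝ) (_ : ∀ t, 0 ≤ C t)
    (_ : ∀ t, ∀ g : ι → Ω t → ℝ, (∀ i a, 0 ≤ g i a) →
      (∀ i, ¬ D i t → ∀ a b, g i a = g i b) →
      ∑ a, w t a * ∏ i, g i a ≤ C t * ∏ i, Real.sqrt (∑ a, w t a * g i a ^ 2))
    (f : ι → (∀ t, Ω t) → ℝ) (_ : ∀ i x, 0 ≤ f i x)
    (_ : ∀ i (x y : ∀ t, Ω t), (∀ t, D i t → x t = y t) → f i x = f i y),
    ∑ x : ∀ t, Ω t, (∏ t, w t (x t)) * ∏ i, f i x ≤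
      (∏ t, C t) * ∏ i, Real.sqrt (∑ x : ∀ t, Ω t, (∏ t, w t (x t)) * f i x ^ 2) := by
  intro n
  induction n with
  | zero =>
    intro Ω _ w hw D C hC H f hf hdep
    simp [Real.sqrt_sq (hf _ _)]
  | succ n ih =>
    intro Ω _ w hw D C hC H f hf hdep
    have hnn : ∀ i (y : ∀ t : Fin n, Ω t.succ),
        0 ≤ ∑ a, w 0 a * f i (Fin.cons a y) ^ 2 := fun i y =>
      Finset.sum_nonneg fun a _ => mul_nonneg (hw 0 a) (sq_nonneg _)
    have key := ih (fun t => Ω t.succ) (fun t => w t.succ) (fun t => hw t.succ)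
      (fun i t => D i t.succ) (fun t => C t.succ) (fun t => hC t.succ) (fun t => H t.succ)
      (fun i y => Real.sqrt (∑ a, w 0 a * f i (Fin.cons a y) ^ 2))
      (fun i y => Real.sqrt_nonneg _)
      (by
        intro i x y hxy
        congr 1
        refine Finset.sum_congr rfl fun a _ => ?_
        congr 2
        apply hdep
        intro t
        refine Fin.cases ?_ (fun t => ?_) t
        · intro _; rfl
        · intro h; simpa using hxy t h)
    simp only [Real.sq_sqrt (hnn _ _)] at key
    rw [aux_sum]
    simp only [aux_sum Ω w (fun x => f _ x ^ 2)]
    rw [Fin.prod_univ_succ, mul_assoc]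
    refine le_trans ?_ (mul_le_mul_of_nonneg_left key (hC 0))
    rw [Finset.mul_sum]
    refine Finset.sum_le_sum fun y _ => ?_
    rw [mul_left_comm]
    apply mul_le_mul_of_nonneg_left _ (Finset.prod_nonneg fun t _ => hw _ _)
    refine H 0 (fun i a => f i (Fin.cons a y)) (fun i a => hf _ _) ?_
    intro i hi a b
    apply hdep
    intro t
    refine Fin.cases ?_ (fun t => ?_) t
    · intro h; exact absurd h hi
    · intro _; simp

/-- the correlation bound for functions of disjointly-supported juntas in a
finite product probability space (Lemma 6.10). Expectations over the product space
`Ω = ∏ t, Ω t` with product weights `x ↦ ∏ t, w t (x t)` are written as finite sums. -/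
theorem statement18 {n : ℕ} (q : ℕ) (hq : 1 ≤ q)
    (Ω : Fin n → Type*) [∀ t, Fintype (Ω t)]
    (w : ∀ t, Ω t → ℝ) (p : Fin n → ℝ)
    (hp : ∀ t, 0 < p t) (hp' : ∀ t, p t < 1/2)
    (hatom : ∀ t a, p t ≤ w t a) (hsum : ∀ t, ∑ a, w t a = 1)
    (f : Fin q → (∀ t, Ω t) → ℝ) (S : Fin q → Finset (Fin n))
    (hdep : ∀ i (x y : ∀ t, Ω t), (∀ t ∈ S i, x t = y t) → f i x = f i y) :
    |∑ x : ∀ t, Ω t, (∏ t, w t (x t)) * ∏ i, f i x| ≤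
      (∏ i, Real.sqrt (∑ x : ∀ t, Ω t, (∏ t, w t (x t)) * f i x ^ 2)) *
      ∏ j ∈ Finset.Icc 3 q,
        ∏ t ∈ Finset.univ.filter
            (fun t => (Finset.univ.filter (fun i => t ∈ S i)).card = j),
          Real.sqrt (p t * (1 - p t)) ^ ((2 : ℤ) - (j : ℤ)) := by
  classical
  have hw : ∀ t a, 0 ≤ w t a := fun t a => (hp t).le.trans (hatom t a)
  set c : Fin n → ℕ := fun t => (Finset.univ.filter (fun i => t ∈ S i)).card with hc
  set C : Fin n → ℝ := fun t =>
    if 3 ≤ c t then Real.sqrt (p t * (1 - p t)) ^ ((2 : ℤ) - (c t : ℤ)) else 1 with hCdef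
  have hC : ∀ t, 0 ≤ C t := by
    intro t
    simp only [hCdef]
    split_ifs <;> positivity
  have hcq : ∀ t, c t ≤ q := fun t => by
    simpa using Finset.card_le_univ (Finset.univ.filter (fun i => t ∈ S i))
  have hprod : ∏ j ∈ Finset.Icc 3 q, ∏ t ∈ Finset.univ.filter (fun t => c t = j),
      Real.sqrt (p t * (1 - p t)) ^ ((2 : ℤ) - (j : ℤ)) = ∏ t, C t := by
    simp only [Finset.prod_filter]
    rw [Finset.prod_comm]
    refine Finset.prod_congr rfl fun t _ => ?_
    rw [Finset.prod_ite_eq]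
    simp [hCdef, hcq t]
  have hmain := aux_main n Ω w hw (fun i t => t ∈ S i) C hC
    (by
      intro t g hg hJ
      exact aux_one (w t) (p t) (hp t) (hp' t) (hatom t) (hsum t)
        (Finset.univ.filter (fun i => t ∈ S i)) g hg
        (fun i hi => hJ i (by simpa using hi)))
    (fun i x => |f i x|) (fun i x => abs_nonneg _)
    (fun i x y h => by rw [hdep i x y h])
  simp only [sq_abs] at hmain
  refine le_trans (Finset.abs_sum_le_sum_abs _ _) ?_
  rw [hprod, mul_comm]
  refine le_trans (le_of_eq ?_) hmain
  refine Finset.sum_congr rfl fun x _ => ?_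
  rw [abs_mul, Finset.abs_prod univ (fun i => f i x),
    abs_of_nonneg (Finset.prod_nonneg fun t _ => hw _ _)]
end
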